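/- Let (X, μ) be a probability space and f_1,...,f_N complex integrable functions with ∫_X f_n dμ = 0 for each n. Then for any p ≥ 1, ∫_{X^N} |∑_{n≤N} f_n(y_n)|^p dμ^N(y) ≤ ∫_{X^{2N}} |∑_{n≤2N} (-1)^n f_{⌈n/2⌉}(x_n)|^p dμ^{2N}(x). -/

import Mathlib

open MeasureTheory Finset

/-!
If `G` has mean zero and `w` is an independent copy of `y`, then `G y` is the average of
`G y - G w` over `w`, so Jensen's inequality for `t ↦ |t| ^ p` bounds `‖G y‖ ^ p` by the average of
`‖G y - G w‖ ^ p`. Take `G y = ∑ n, f n (y n)`; interleaving the coordinates of `w` and `y` turns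
`G y - G w` into the alternating sum.
-/

section Jensen

variable {E Y Z : Type*} [NormedAddCommGroup E] [MeasurableSpace Y] [MeasurableSpace Z] {p : ℝ}

lemma integrable_norm_rpow_iff_memLp_ofReal {ν : Measure Y} {g : Y → E}
    (hg : AEStronglyMeasurable g ν) (hp : 0 < p) :
    Integrable (fun y => ‖g y‖ ^ p) ν ↔ MemLp g (ENNReal.ofReal p) ν := by
  simpa only [ENNReal.toReal_ofReal hp.le] using
    integrable_norm_rpow_iff hg (ENNReal.ofReal_pos.2 hp).ne' ENNReal.ofReal_ne_top

variable [NormedSpace ℝ E]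

lemma norm_integral_rpow_le_integral_norm_rpow {ν : Measure Y} [IsProbabilityMeasure ν]
    {g : Y → E} (hp : 1 ≤ p) (hg : MemLp g (ENNReal.ofReal p) ν) :
    ‖∫ y, g y ∂ν‖ ^ p ≤ ∫ y, ‖g y‖ ^ p ∂ν := by
  have hp₀ : 0 < p := zero_lt_one.trans_le hp
  have hg₁ : Integrable g ν := hg.integrable (by simpa using hp)
  calc ‖∫ y, g y ∂ν‖ ^ p
      ≤ (∫ y, ‖g y‖ ∂ν) ^ p :=
        Real.rpow_le_rpow (norm_nonneg _) (norm_integral_le_integral_norm g) hp₀.le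
    _ ≤ ∫ y, ‖g y‖ ^ p ∂ν :=
        (convexOn_rpow hp).map_integral_le (Real.continuous_rpow_const hp₀.le).continuousOn
          isClosed_Ici (.of_forall fun y => norm_nonneg (g y)) hg₁.norm
          ((integrable_norm_rpow_iff_memLp_ofReal hg.1 hp₀).2 hg)

variable [CompleteSpace E]

lemma integral_norm_rpow_le_integral_prod_norm_sub_rpow {ν : Measure Y} [IsFiniteMeasure ν]
    {ρ : Measure Z} [IsProbabilityMeasure ρ] {G : Y → E} {H : Z → E} (hp : 1 ≤ p)
    (hG : MemLp G (ENNReal.ofReal p) ν) (hH : MemLp H (ENNReal.ofReal p) ρ)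
    (hH₀ : ∫ z, H z ∂ρ = 0) :
    ∫ y, ‖G y‖ ^ p ∂ν ≤ ∫ w : Y × Z, ‖G w.1 - H w.2‖ ^ p ∂(ν.prod ρ) := by
  have hp₀ : 0 < p := zero_lt_one.trans_le hp
  have hGH : MemLp (fun w : Y × Z => G w.1 - H w.2) (ENNReal.ofReal p) (ν.prod ρ) :=
    (hG.comp_fst ρ).sub (hH.comp_snd ν)
  have hGHp : Integrable (fun w : Y × Z => ‖G w.1 - H w.2‖ ^ p) (ν.prod ρ) :=
    (integrable_norm_rpow_iff_memLp_ofReal hGH.1 hp₀).2 hGH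
  have fiber_bound (y : Y) : ‖G y‖ ^ p ≤ ∫ z, ‖G y - H z‖ ^ p ∂ρ := by
    have fiber_memLp : MemLp (fun z => G y - H z) (ENNReal.ofReal p) ρ :=
      (memLp_const (G y)).sub hH
    have fiber_mean : ∫ z, (G y - H z) ∂ρ = G y := by
      rw [integral_sub (integrable_const _) (hH.integrable (by simpa using hp)), hH₀]
      simp
    simpa only [fiber_mean] using norm_integral_rpow_le_integral_norm_rpow hp fiber_memLp
  rw [integral_prod _ hGHp]
  exact integral_mono ((integrable_norm_rpow_iff_memLp_ofReal hG.1 hp₀).2 hG)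
    hGHp.integral_prod_left fiber_bound

lemma integral_norm_rpow_le_integral_prod_self_norm_sub_rpow {ν : Measure Y}
    [IsProbabilityMeasure ν] {G : Y → E} (hp : 1 ≤ p) (hG : Integrable G ν)
    (hG₀ : ∫ y, G y ∂ν = 0) :
    ∫ y, ‖G y‖ ^ p ∂ν ≤ ∫ w : Y × Y, ‖G w.1 - G w.2‖ ^ p ∂(ν.prod ν) := by
  by_cases hGp : MemLp G (ENNReal.ofReal p) ν
  · exact integral_norm_rpow_le_integral_prod_norm_sub_rpow hp hGp hGp hG₀
  · -- The Bochner integral on the left takes its junk value `0` here.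
    rw [← integrable_norm_rpow_iff_memLp_ofReal hG.1 (zero_lt_one.trans_le hp)] at hGp
    rw [integral_undef hGp]
    positivity

end Jensen

section DoubledProduct

variable {ι β κ : Type*} {X : ι → Type*} [∀ i, MeasurableSpace (X i)]

/-- The dependent form of currying followed by a swap of the arguments: a point of the product in
which every factor `X i` is repeated once for each `b : β` is a `β`-indexed family of points of
`∀ i, X i`. With `β = Fin 2` it splits the doubled product into its two independent copies. -/
def piProdEquivArrowPi (X : ι → Type*) [∀ i, MeasurableSpace (X i)] (β : Type*) :
    (∀ q : ι × β, X q.1) ≃ᵐ (β → ∀ i, X i) where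
  toFun x b i := x (i, b)
  invFun z q := z q.2 q.1
  measurable_toFun := by simp only [Equiv.coe_fn_mk]; fun_prop
  measurable_invFun := by simp only [Equiv.coe_fn_symm_mk]; fun_prop

variable [Fintype ι] [Fintype β] [Fintype κ] (μ : ∀ i, Measure (X i))

lemma measurePreserving_piProdEquivArrowPi_symm [∀ i, SigmaFinite (μ i)] :
    MeasurePreserving (piProdEquivArrowPi X β).symm (Measure.pi fun _ => Measure.pi μ)
      (Measure.pi fun q : ι × β => μ q.1) where
  measurable := (piProdEquivArrowPi X β).symm.measurable
  map_eq := by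
    refine (Measure.pi_eq fun s _ => ?_).symm
    have preimage_box : (piProdEquivArrowPi X β).symm ⁻¹' Set.univ.pi s =
        Set.univ.pi fun b => Set.univ.pi fun i => s (i, b) := by
      ext z
      simp only [piProdEquivArrowPi, Set.mem_preimage, Set.mem_univ_pi, Prod.forall]
      exact forall_comm
    rw [MeasurableEquiv.map_apply, preimage_box]
    simp only [Measure.pi_pi, Fintype.prod_prod_type_right]

lemma integral_pi_comp_equiv_prod {F : Type*} [NormedAddCommGroup F] [NormedSpace ℝ F]
    [∀ i, SigmaFinite (μ i)] (e : κ ≃ ι × β) (Φ : (∀ k, X (e k).1) → F) :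
    ∫ x, Φ x ∂(Measure.pi fun k => μ (e k).1) =
      ∫ z : β → ∀ i, X i, Φ (fun k => z (e k).2 (e k).1)
        ∂(Measure.pi fun _ => Measure.pi μ) :=
  (((measurePreserving_piProdEquivArrowPi_symm μ).trans
    (measurePreserving_piCongrLeft (fun q : ι × β => μ q.1) e).symm).integral_comp'
    (f := (piProdEquivArrowPi X β).symm.trans
      (MeasurableEquiv.piCongrLeft (fun q : ι × β => X q.1) e).symm) Φ).symm

end DoubledProduct

section Symmetrization

variable {ι κ E : Type*} [Fintype ι] [Fintype κ] [NormedAddCommGroup E] [NormedSpace ℝ E]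

lemma sum_neg_one_pow_smul_comp_equiv_prod_fin_two (e : κ ≃ ι × Fin 2) (g : Fin 2 → ι → E) :
    ∑ k, (-1 : ℝ) ^ ((e k).2.val + 1) • g (e k).2 (e k).1 = ∑ i, g 1 i - ∑ i, g 0 i := by
  rw [e.sum_comp fun q : ι × Fin 2 => (-1 : ℝ) ^ (q.2.val + 1) • g q.2 q.1,
    Fintype.sum_prod_type_right, Fin.sum_univ_two]
  simp [neg_add_eq_sub]

variable {X : ι → Type*} [∀ i, MeasurableSpace (X i)] {μ : ∀ i, Measure (X i)}
  [∀ i, IsProbabilityMeasure (μ i)] {f : ∀ i, X i → E}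

lemma integral_pi_sum_comp_eval (hf : ∀ i, Integrable (f i) (μ i)) :
    ∫ y, ∑ i, f i (y i) ∂(Measure.pi μ) = ∑ i, ∫ x, f i x ∂(μ i) := by
  rw [integral_finsetSum _ fun i _ => integrable_comp_eval (hf i)]
  exact sum_congr rfl fun i _ => integral_comp_eval (hf i).1

theorem integral_norm_sum_rpow_le_of_equiv_prod_fin_two [CompleteSpace E]
    (hf : ∀ i, Integrable (f i) (μ i)) (hf₀ : ∀ i, ∫ x, f i x ∂(μ i) = 0) {p : ℝ} (hp : 1 ≤ p)
    (e : κ ≃ ι × Fin 2) :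
    ∫ y, ‖∑ i, f i (y i)‖ ^ p ∂(Measure.pi μ) ≤
      ∫ x : ∀ k, X (e k).1, ‖∑ k, (-1 : ℝ) ^ ((e k).2.val + 1) • f (e k).1 (x k)‖ ^ p
        ∂(Measure.pi fun k => μ (e k).1) := by
  let G (y : ∀ i, X i) : E := ∑ i, f i (y i)
  have hG : Integrable G (Measure.pi μ) :=
    integrable_finsetSum _ fun i _ => integrable_comp_eval (hf i)
  have hG₀ : ∫ y, G y ∂(Measure.pi μ) = 0 :=
    (integral_pi_sum_comp_eval hf).trans (sum_eq_zero fun i _ => hf₀ i)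
  calc ∫ y, ‖G y‖ ^ p ∂(Measure.pi μ)
      ≤ ∫ w, ‖G w.1 - G w.2‖ ^ p ∂((Measure.pi μ).prod (Measure.pi μ)) :=
        integral_norm_rpow_le_integral_prod_self_norm_sub_rpow hp hG hG₀
    _ = ∫ z : Fin 2 → ∀ i, X i, ‖G (z 0) - G (z 1)‖ ^ p ∂(Measure.pi fun _ => Measure.pi μ) :=
        ((measurePreserving_finTwoArrow (Measure.pi μ)).integral_comp'
          fun w => ‖G w.1 - G w.2‖ ^ p).symm
    _ = _ := by
        rw [integral_pi_comp_equiv_prod]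
        refine integral_congr_ae (.of_forall fun z => ?_)
        dsimp only [G]
        rw [sum_neg_one_pow_smul_comp_equiv_prod_fin_two e fun b i => f i (z b i), norm_sub_rev]

end Symmetrization

theorem mz_symmetrization_general {E : Type*} [NormedAddCommGroup E] [NormedSpace ℝ E]
    [CompleteSpace E] {N : ℕ} {X : Fin N → Type*} [∀ n, MeasurableSpace (X n)]
    (μ : ∀ n, Measure (X n)) [∀ n, IsProbabilityMeasure (μ n)] {f : ∀ n, X n → E}
    (hf : ∀ n, Integrable (f n) (μ n)) (hf₀ : ∀ n, ∫ x, f n x ∂(μ n) = 0) {p : ℝ} (hp : 1 ≤ p) :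
    ∫ y, ‖∑ n, f n (y n)‖ ^ p ∂(Measure.pi μ)
      ≤ ∫ x : ∀ n : Fin (2 * N), X ⟨(n : ℕ) / 2, Nat.div_lt_of_lt_mul n.isLt⟩,
          ‖∑ n : Fin (2 * N), (-1 : ℝ) ^ ((n : ℕ) + 1) •
            f ⟨(n : ℕ) / 2, Nat.div_lt_of_lt_mul n.isLt⟩ (x n)‖ ^ p
          ∂(Measure.pi fun n : Fin (2 * N) => μ ⟨(n : ℕ) / 2, Nat.div_lt_of_lt_mul n.isLt⟩) := by
  let e : Fin (2 * N) ≃ Fin N × Fin 2 := (finCongr (mul_comm 2 N)).trans finProdFinEquiv.symm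
  have sign_eq (n : Fin (2 * N)) : (-1 : ℝ) ^ ((e n).2.val + 1) = (-1) ^ ((n : ℕ) + 1) := by
    have mod_two : (e n).2.val = n % 2 := rfl
    rw [mod_two, pow_succ, pow_succ, ← neg_one_pow_eq_pow_mod_two]
  simp only [← sign_eq]
  exact integral_norm_sum_rpow_le_of_equiv_prod_fin_two hf hf₀ hp e

theorem mz_symmetrization {X : Type*} [MeasurableSpace X]
    (μ : Measure X) [IsProbabilityMeasure μ] (N : ℕ) (hN : 0 < N)
    (f : Fin N → X → ℂ) (hf : ∀ n, Integrable (f n) μ)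
    (hf0 : ∀ n, ∫ x, f n x ∂μ = 0) (p : ℝ) (hp : 1 ≤ p) :
    ∫ y : Fin N → X, ‖∑ n, f n (y n)‖ ^ p ∂(Measure.pi fun _ => μ)
      ≤ ∫ x : Fin (2 * N) → X,
          ‖∑ n : Fin (2 * N), (-1 : ℂ) ^ ((n : ℕ) + 1) *
            f ⟨(n : ℕ) / 2, by omega⟩ (x n)‖ ^ p ∂(Measure.pi fun _ => μ) := by
  simpa using mz_symmetrization_general (fun _ => μ) hf hf0 hp
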